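/- Let ℓ ≥ 2 be an integer, let m be an odd positive integer, and set w = 3m². Let p₁ and p₂ be primes with p₁ ≡ 11 (mod 24), p₂ ≡ 7 (mod 24) and p₁ + p₂ = 2·w^{2^{ℓ−1}}. Then the 2-class group of ℚ(√(−p₁p₂)) is isomorphic to (ℤ/2ℤ) × (ℤ/2^ℓℤ). -/

import Mathlib

open NumberField

/-- `twoClassGroupIso d G` says: for any realization `K` of the imaginary quadratic field
`ℚ(√-d)` (i.e. a number field generated over `ℚ` by a square root of `-d`), every Sylow
2-subgroup of the ideal class group of its ring of integers (the 2-class group `Cl₂(-d)`)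
is isomorphic to `G`. -/
def twoClassGroupIso (d : ℕ) (G : Type) [Group G] : Prop :=
  ∀ (K : Type) [Field K] [NumberField K] (α : K),
    α ^ 2 = -(d : K) →
    IntermediateField.adjoin ℚ {α} = ⊤ →
    ∀ P : Sylow 2 (ClassGroup (NumberField.RingOfIntegers K)),
      Nonempty ((P : Subgroup (ClassGroup (NumberField.RingOfIntegers K))) ≃* G)


set_option linter.unusedSectionVars false

section
open nonZeroDivisors

section
variable {O : Type*} [CommRing O] [IsDedekindDomain O] [Module.Free ℤ O] [Module.Finite ℤ O]

theorem aux_pd (I J : Ideal O) : I ^ 2 ∣ J ^ 2 ↔ I ∣ J :=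
  UniqueFactorizationMonoid.pow_dvd_pow_iff_dvd (two_ne_zero)

theorem aux_sq_inj (I J : Ideal O) (h : I ^ 2 = J ^ 2) : I = J := by
  have h1 : I ∣ J := (aux_pd _ _).mp h.dvd
  have h2 : J ∣ I := (aux_pd _ _).mp h.symm.dvd
  exact dvd_antisymm h1 h2

theorem aux_principal (I : (Ideal O)⁰) (h : ClassGroup.mk0 I = 1) :
    ∃ z : O, (I : Ideal O) = Ideal.span {z} := by
  obtain ⟨I, hI⟩ := I
  obtain ⟨z, hz⟩ := (ClassGroup.mk0_eq_one_iff hI).mp h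
  exact ⟨z, hz⟩

theorem aux_one (I : (Ideal O)⁰) (z : O) (h : (I : Ideal O) = Ideal.span {z}) :
    ClassGroup.mk0 I = 1 := by
  obtain ⟨I, hI⟩ := I
  exact (ClassGroup.mk0_eq_one_iff hI).mpr ⟨z, h⟩

theorem aux_nonsq (d : ℤ) (ω : O)
    (hrep : ∀ z : O, ∃ x y : ℤ, z = x + y * ω)
    (hnorm : ∀ x y : ℤ, (Ideal.absNorm (Ideal.span {(x : O) + y * ω}) : ℤ) = x ^ 2 + d * y ^ 2)
    (c : ℤ) (hc : ∀ x y z : ℤ, z ≠ 0 → c * z ^ 2 ≠ x ^ 2 + d * y ^ 2)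
    (I : (Ideal O)⁰) (k : ℤ) (hk : k ≠ 0) (hI : (Ideal.absNorm (I : Ideal O) : ℤ) = c * k ^ 2)
    (s : ClassGroup O) : ClassGroup.mk0 I ≠ s ^ 2 := by
  intro h
  obtain ⟨J, hJ⟩ := ClassGroup.mk0_surjective s⁻¹
  have h1 : ClassGroup.mk0 (I * J ^ 2) = 1 := by
    rw [map_mul, map_pow, hJ, h]; simp
  obtain ⟨z, h3⟩ := aux_principal _ h1
  obtain ⟨x, y, rfl⟩ := hrep z
  have h4 := hnorm x y
  rw [← h3] at h4
  simp only [Submonoid.coe_mul, SubmonoidClass.coe_pow, map_mul, map_pow] at h4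
  push_cast at h4
  rw [hI] at h4
  have hJ0 : (Ideal.absNorm (J : Ideal O) : ℤ) ≠ 0 := by
    have : (J : Ideal O) ≠ ⊥ := nonZeroDivisors.coe_ne_zero J
    rw [Ne, Nat.cast_eq_zero, Ideal.absNorm_eq_zero_iff]
    exact this
  exact hc x y (k * Ideal.absNorm (J : Ideal O)) (mul_ne_zero hk hJ0) (by rw [← h4]; ring)

/-- ambiguous classes contain ideals whose square is generated by a rational integer -/
theorem aux_amb (d : ℤ) (ω : O) (hω : ω ^ 2 = -(d : O))
    (hrep : ∀ z : O, ∃ x y : ℤ, z = x + y * ω)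
    (hnorm : ∀ x y : ℤ, (Ideal.absNorm (Ideal.span {(x : O) + y * ω}) : ℤ) = x ^ 2 + d * y ^ 2)
    (hinj : ∀ x y : ℤ, (x : O) + y * ω = 0 → x = 0 ∧ y = 0)
    (C : ClassGroup O) (hC : C ^ 2 = 1) :
    ∃ (J : (Ideal O)⁰) (a : ℤ), ClassGroup.mk0 J = C ∧ (J : Ideal O) ^ 2 = Ideal.span {(a : O)} := by
  obtain ⟨I, rfl⟩ := ClassGroup.mk0_surjective C
  rw [← map_pow] at hC
  obtain ⟨z, hz⟩ := aux_principal _ hC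
  obtain ⟨x, y, rfl⟩ := hrep z
  have h3 : (I : Ideal O) ^ 2 = Ideal.span {(x : O) + y * ω} := by
    rw [← hz, SubmonoidClass.coe_pow]
  set N : ℤ := (Ideal.absNorm (I : Ideal O) : ℤ) with hN
  have h4 : N ^ 2 = x ^ 2 + d * y ^ 2 := by
    rw [← hnorm, ← h3, map_pow]; push_cast; rfl
  by_cases h0 : N + x = 0 ∧ y = 0
  · obtain ⟨hx, rfl⟩ := h0
    refine ⟨I, x, rfl, ?_⟩
    rw [h3]; simp
  · let β : O := ((N + x : ℤ) : O) + ((-y : ℤ) : O) * ω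
    have hβ : β ≠ 0 := by
      intro hb
      have := hinj _ _ hb
      apply h0
      exact ⟨this.1, by linarith [this.2]⟩
    have hβ' : Ideal.span {β} ∈ (Ideal O)⁰ := by
      rw [mem_nonZeroDivisors_iff_ne_zero]
      simpa using hβ
    refine ⟨⟨Ideal.span {β}, hβ'⟩ * I, N * ((N + x) ^ 2 + d * y ^ 2), ?_, ?_⟩
    · rw [map_mul, aux_one ⟨Ideal.span {β}, hβ'⟩ β rfl, one_mul]
    · rw [Submonoid.coe_mul, mul_pow, h3, Ideal.span_singleton_pow, Ideal.span_singleton_mul_span_singleton]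
      congr 2
      have h5 : (N : O) ^ 2 = x ^ 2 + d * y ^ 2 := by exact_mod_cast congrArg (Int.cast : ℤ → O) h4
      simp only [β]
      push_cast
      have e1 : ((N : O) + x + -y * ω) * (x + y * ω) = N * (N + x + y * ω) := by
        linear_combination -(y : O) ^ 2 * hω - h5
      have e2 : ((N : O) + x + -y * ω) * (N + x + y * ω) = (N + x) ^ 2 + d * y ^ 2 := by
        linear_combination -(y : O) ^ 2 * hω
      linear_combination ((N : O) + x + -y * ω) * e1 + N * e2

theorem aux_prim (d : ℤ) (ω : O) (hω : ω ^ 2 = -(d : O))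
    (hrep : ∀ z : O, ∃ x y : ℤ, z = x + y * ω)
    (hinj : ∀ x y : ℤ, (x : O) + y * ω = 0 → x = 0 ∧ y = 0)
    (J : Ideal O) (hJ : J ≠ 0) (a : ℤ) (ha : J ^ 2 = Ideal.span {(a : O)}) :
    ∃ (n : O) (J' : Ideal O) (e : ℤ), n ≠ 0 ∧ J = Ideal.span {n} * J' ∧
      J' ^ 2 = Ideal.span {(e : O)} ∧ e ∣ 2 * d := by
  have hinj2 : ∀ x y x' y' : ℤ, (x : O) + y * ω = x' + y' * ω → x = x' ∧ y = y' := by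
    intro x y x' y' h
    have := hinj (x - x') (y - y') (by push_cast; linear_combination h)
    omega
  have hωJ : ∀ x y : ℤ, (x : O) + y * ω ∈ J → ((-d * y : ℤ) : O) + (x : ℤ) * ω ∈ J := by
    intro x y h
    have := J.mul_mem_left ω h
    convert this using 1
    push_cast
    linear_combination -(y : O) * hω
  let Y : Ideal ℤ :=
    { carrier := {y | ∃ x : ℤ, (x : O) + y * ω ∈ J}
      zero_mem' := ⟨0, by simp⟩
      add_mem' := by
        rintro y y' ⟨x, hx⟩ ⟨x', hx'⟩
        refine ⟨x + x', ?_⟩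
        have := J.add_mem hx hx'
        convert this using 1
        push_cast; ring
      smul_mem' := by
        rintro k y ⟨x, hx⟩
        refine ⟨k * x, ?_⟩
        have := J.mul_mem_left (k : O) hx
        convert this using 1
        simp only [smul_eq_mul]
        push_cast; ring }
  obtain ⟨n, hn⟩ := (IsPrincipalIdealRing.principal Y).principal
  have hn' : ∀ y, y ∈ Y ↔ n ∣ y := by
    intro y
    rw [hn]
    exact Ideal.mem_span_singleton
  have hdiv : ∀ x y : ℤ, (x : O) + y * ω ∈ J → n ∣ x ∧ n ∣ y := by
    intro x y h
    exact ⟨(hn' x).mp ⟨_, hωJ x y h⟩, (hn' y).mp ⟨_, h⟩⟩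
  have hn0 : n ≠ 0 := by
    rintro rfl
    apply hJ
    rw [Ideal.zero_eq_bot, eq_bot_iff]
    intro z hz
    obtain ⟨x, y, rfl⟩ := hrep z
    obtain ⟨h1, h2⟩ := hdiv x y hz
    simp [zero_dvd_iff.mp h1, zero_dvd_iff.mp h2]
  have hn0' : (n : O) ≠ 0 := by
    intro h
    exact hn0 (hinj n 0 (by simpa using h)).1
  have hle : J ≤ Ideal.span {(n : O)} := by
    intro z hz
    obtain ⟨x, y, rfl⟩ := hrep z
    obtain ⟨⟨x', rfl⟩, ⟨y', rfl⟩⟩ := hdiv x y hz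
    rw [Ideal.mem_span_singleton]
    exact ⟨x' + y' * ω, by push_cast; ring⟩
  obtain ⟨J', hJ'⟩ := Ideal.dvd_iff_le.mpr hle
  obtain ⟨x0, hx0⟩ := (hn' n).mpr dvd_rfl
  obtain ⟨b, hb⟩ : ∃ b : ℤ, (b : O) + ω ∈ J' := by
    rw [hJ', Ideal.mem_span_singleton_mul] at hx0
    obtain ⟨z, hz, hz2⟩ := hx0
    obtain ⟨r, s, rfl⟩ := hrep z
    have := hinj2 (n * r) (n * s) x0 n (by push_cast; linear_combination hz2)
    have hs : s = 1 := mul_left_cancel₀ hn0 (by rw [this.2, mul_one])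
    subst hs
    exact ⟨r, by simpa using hz⟩
  have hsq : Ideal.span {(n : O) ^ 2} * J' ^ 2 = Ideal.span {(a : O)} := by
    rw [← ha, hJ', mul_pow, Ideal.span_singleton_pow]
  have hamem : (a : O) ∈ Ideal.span {(n : O) ^ 2} := by
    have h1 : (a : O) ∈ Ideal.span {(n : O) ^ 2} * J' ^ 2 := by
      rw [hsq]; exact Ideal.mem_span_singleton_self _
    exact (Ideal.mul_le_left : Ideal.span {(n : O) ^ 2} * J' ^ 2 ≤ _) h1
  obtain ⟨c, hc⟩ := Ideal.mem_span_singleton.mp hamem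
  obtain ⟨e, s, rfl⟩ := hrep c
  have hs : s = 0 := by
    have := (hinj2 a 0 (n ^ 2 * e) (n ^ 2 * s) (by push_cast; linear_combination hc)).2
    have h2 : n ^ 2 ≠ 0 := pow_ne_zero _ hn0
    rcases mul_eq_zero.mp this.symm with h | h
    · exact absurd h h2
    · exact h
  subst hs
  have hJ2 : J' ^ 2 = Ideal.span {(e : O)} := by
    have h0 : Ideal.span {(n : O) ^ 2} ≠ 0 := by
      simpa using hn0'
    apply mul_left_cancel₀ h0
    rw [hsq, Ideal.span_singleton_mul_span_singleton, hc]
    simp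
  have hmem : ∀ x y : ℤ, (x : O) + y * ω ∈ J' ^ 2 → e ∣ x ∧ e ∣ y := by
    intro x y h
    rw [hJ2, Ideal.mem_span_singleton] at h
    obtain ⟨c, hc⟩ := h
    obtain ⟨r, s, rfl⟩ := hrep c
    have := hinj2 x y (e * r) (e * s) (by push_cast; linear_combination hc)
    exact ⟨⟨r, this.1⟩, ⟨s, this.2⟩⟩
  refine ⟨n, J', e, hn0', hJ', hJ2, ?_⟩
  have h1 := hmem (b ^ 2 - d) (2 * b) (by
    have := Ideal.mul_mem_mul hb hb
    rw [← pow_two] at this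
    convert this using 1
    push_cast
    linear_combination -hω)
  obtain ⟨k, hk⟩ := h1.2
  obtain ⟨j, hj⟩ := h1.1
  refine ⟨b * k - 2 * j, ?_⟩
  linear_combination b * hk - 2 * hj


theorem aux_descent (p : ℕ) (hp : p.Prime) (e : ℤ) (he : ¬ (p : ℤ) ∣ e) (c : ℤ)
    (hc : ¬ IsSquare (c : ZMod p)) :
    ∀ (k : ℕ) (x y z : ℤ), z.natAbs ≤ k → z ≠ 0 → c * z ^ 2 ≠ x ^ 2 + (p * e) * y ^ 2 := by
  have := Fact.mk hp
  intro k
  induction k with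
  | zero => intro x y z hk hz; omega
  | succ k ih =>
    intro x y z hk hz h
    have hpp : Prime (p : ℤ) := Nat.prime_iff_prime_int.mp hp
    have hmod : (c : ZMod p) * (z : ZMod p) ^ 2 = (x : ZMod p) ^ 2 := by
      have := congrArg (Int.cast : ℤ → ZMod p) h
      push_cast at this
      simpa using this
    have hz0 : (z : ZMod p) = 0 := by
      by_contra hne
      apply hc
      refine ⟨(x : ZMod p) / z, ?_⟩
      field_simp
      exact hmod
    have hx0 : (x : ZMod p) = 0 := by
      rw [hz0] at hmod
      have : (x : ZMod p) ^ 2 = 0 := by rw [← hmod]; ring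
      exact pow_eq_zero_iff (two_ne_zero) |>.mp this
    rw [ZMod.intCast_zmod_eq_zero_iff_dvd] at hz0 hx0
    obtain ⟨z', rfl⟩ := hz0
    obtain ⟨x', rfl⟩ := hx0
    have hp0 : (p : ℤ) ≠ 0 := hpp.ne_zero
    have h2 : (p : ℤ) * (c * z' ^ 2 - x' ^ 2) = e * y ^ 2 := by
      apply mul_left_cancel₀ hp0
      linear_combination h
    have hy : (p : ℤ) ∣ y := by
      have : (p : ℤ) ∣ e * y ^ 2 := ⟨_, h2.symm⟩
      rcases hpp.dvd_or_dvd this with h3 | h3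
      · exact absurd h3 he
      · exact hpp.dvd_of_dvd_pow h3
    obtain ⟨y', rfl⟩ := hy
    have hz' : z' ≠ 0 := by rintro rfl; simp at hz
    apply ih x' y' z' _ hz'
    · apply mul_left_cancel₀ hp0
      linear_combination h2
    · have : ((p : ℤ) * z').natAbs = p * z'.natAbs := by simp [Int.natAbs_mul]
      rw [this] at hk
      have h1 := hp.two_le
      have h2 : 0 < z'.natAbs := Int.natAbs_pos.mpr hz'
      nlinarith

theorem aux_res3_1 (p : ℕ) (hp : p.Prime) (h : p % 24 = 11) : IsSquare (3 : ZMod p) := by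
  have hd : ¬ IsSquare (2 : ZMod 3) := by decide
  have := Fact.mk hp
  have h3 := Fact.mk Nat.prime_three
  have := ZMod.exists_sq_eq_prime_iff_of_mod_four_eq_three (p := p) (q := 3) (by omega) (by omega) (by rintro rfl; omega)
  have h2 : ((p : ℕ) : ZMod 3) = 2 := by
    have : p ≡ 2 [MOD 3] := by unfold Nat.ModEq; omega
    exact_mod_cast (ZMod.natCast_eq_natCast_iff p 2 3).mpr this
  rw [h2] at this
  exact_mod_cast this.mpr hd

theorem aux_res3_2 (p : ℕ) (hp : p.Prime) (h : p % 24 = 7) : ¬ IsSquare (3 : ZMod p) := by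
  have := Fact.mk hp
  have h3 := Fact.mk Nat.prime_three
  have := ZMod.exists_sq_eq_prime_iff_of_mod_four_eq_three (p := p) (q := 3) (by omega) (by omega) (by rintro rfl; omega)
  have h2 : ((p : ℕ) : ZMod 3) = 1 := by
    have : p ≡ 1 [MOD 3] := by unfold Nat.ModEq; omega
    exact_mod_cast (ZMod.natCast_eq_natCast_iff p 1 3).mpr this
  rw [h2] at this
  intro hs
  exact this.mp (by exact_mod_cast hs) ⟨1, by simp⟩

theorem aux_res2 (p : ℕ) (hp : p.Prime) (h : p % 24 = 11) : ¬ IsSquare (2 : ZMod p) := by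
  have := Fact.mk hp
  rw [ZMod.exists_sq_eq_two_iff (by rintro rfl; omega)]
  omega

theorem aux_res6 (p : ℕ) (hp : p.Prime) (h : p % 24 = 11) : ¬ IsSquare (6 : ZMod p) := by
  have := Fact.mk hp
  intro h6
  obtain ⟨b, hb⟩ := h6
  obtain ⟨a, ha⟩ := aux_res3_1 p hp h
  have h30 : (3 : ZMod p) ≠ 0 := by
    intro h0
    have : ((3 : ℕ) : ZMod p) = 0 := by exact_mod_cast h0
    rw [ZMod.natCast_eq_zero_iff] at this
    have := Nat.le_of_dvd (by norm_num) this
    omega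
  apply aux_res2 p hp h
  have ha0 : a ≠ 0 := by rintro rfl; simp at ha; exact h30 ha
  refine ⟨b / a, ?_⟩
  field_simp
  have : (6 : ZMod p) = 2 * 3 := by norm_num
  rw [pow_two, pow_two, ← hb, ← ha, this]

theorem aux_group {G : Type*} [CommGroup G] [Finite G] (ℓ : ℕ) (hℓ : 1 ≤ ℓ) (A R S : G)
    (htor : ∀ g : G, g ^ 2 = 1 → g = 1 ∨ g = S ∨ g = R ∨ g = R * S)
    (hR : R ^ 2 = 1) (hA : A ^ 2 ^ ℓ = 1) (hA' : A ^ 2 ^ (ℓ - 1) ≠ 1)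
    (nA : ∀ s : G, A ≠ s ^ 2) (nR : ∀ s : G, R ≠ s ^ 2) (nRA : ∀ s : G, R * A ≠ s ^ 2)
    (P : Sylow 2 G) : Nonempty ((P : Subgroup G) ≃* Multiplicative (ZMod 2 × ZMod (2 ^ ℓ))) := by
  classical
  have : Fact (Nat.Prime 2) := ⟨Nat.prime_two⟩
  have hoA : orderOf A = 2 ^ ℓ := by
    have := orderOf_eq_prime_pow (p := 2) (n := ℓ - 1) (x := A) hA' (by rwa [Nat.sub_add_cancel hℓ])
    rwa [Nat.sub_add_cancel hℓ] at this
  let sq : G →* G := powMonoidHom 2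
  have hker : Nat.card sq.ker ≤ 4 := by
    have h1 : (sq.ker : Set G) ⊆ (({1, S, R, R * S} : Finset G) : Set G) := by
      intro g hg
      have := htor g hg
      simpa using this
    have h2 := Set.ncard_le_ncard h1 (Finset.finite_toSet _)
    rw [Set.ncard_coe_finset] at h2
    exact h2.trans Finset.card_le_four
  have hidx : sq.range.index ≤ 4 := by
    have h1 := Subgroup.card_mul_index sq.range
    have h2 := Subgroup.card_mul_index sq.ker
    rw [Subgroup.index_ker] at h2
    have hpos : 0 < Nat.card sq.range := Nat.card_pos
    have : Nat.card sq.range * sq.range.index = Nat.card sq.range * Nat.card sq.ker := by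
      rw [h1, ← h2, mul_comm]
    rw [Nat.eq_of_mul_eq_mul_left hpos this]
    exact hker
  have hcov : ∀ g : G, ∃ s : G, g = s ^ 2 ∨ g = A * s ^ 2 ∨ g = R * s ^ 2 ∨ g = R * A * s ^ 2 := by
    intro g
    by_contra hcon
    push Not at hcon
    have key : ∀ x y : G, ((x : G ⧸ sq.range) = (y : G ⧸ sq.range)) → ∃ s : G, y = x * s ^ 2 := by
      intro x y h
      rw [QuotientGroup.eq] at h
      obtain ⟨s, hs⟩ := h
      refine ⟨s, ?_⟩
      have : s ^ 2 = x⁻¹ * y := hs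
      rw [this]; group
    have k01 : (((1 : G) : G ⧸ sq.range) ≠ (A : G)) := fun h => by
      obtain ⟨s, hs⟩ := key _ _ h
      exact nA s (by simpa using hs)
    have k02 : (((1 : G) : G ⧸ sq.range) ≠ (R : G)) := fun h => by
      obtain ⟨s, hs⟩ := key _ _ h
      exact nR s (by simpa using hs)
    have k03 : (((1 : G) : G ⧸ sq.range) ≠ (R * A : G)) := fun h => by
      obtain ⟨s, hs⟩ := key _ _ h
      exact nRA s (by rw [hs]; simp)
    have k04 : (((1 : G) : G ⧸ sq.range) ≠ (g : G)) := fun h => by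
      obtain ⟨s, hs⟩ := key _ _ h
      exact (hcon s).1 (by rw [hs]; simp)
    have k12 : (((A : G) : G ⧸ sq.range) ≠ (R : G)) := fun h => by
      obtain ⟨s, hs⟩ := key _ _ h
      exact nRA (A * s) (by rw [hs, mul_pow, pow_two A, mul_right_comm])
    have k13 : (((A : G) : G ⧸ sq.range) ≠ (R * A : G)) := fun h => by
      obtain ⟨s, hs⟩ := key _ _ h
      exact nR s (by rw [mul_comm] at hs; exact mul_left_cancel hs)
    have k14 : (((A : G) : G ⧸ sq.range) ≠ (g : G)) := fun h => by
      obtain ⟨s, hs⟩ := key _ _ h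
      exact (hcon s).2.1 hs
    have k23 : (((R : G) : G ⧸ sq.range) ≠ (R * A : G)) := fun h => by
      obtain ⟨s, hs⟩ := key _ _ h
      exact nA s (mul_left_cancel hs)
    have k24 : (((R : G) : G ⧸ sq.range) ≠ (g : G)) := fun h => by
      obtain ⟨s, hs⟩ := key _ _ h
      exact (hcon s).2.2.1 hs
    have k34 : (((R * A : G) : G ⧸ sq.range) ≠ (g : G)) := fun h => by
      obtain ⟨s, hs⟩ := key _ _ h
      exact (hcon s).2.2.2 hs
    have hc : ({((1 : G) : G ⧸ sq.range), ((A : G) : G ⧸ sq.range), ((R : G) : G ⧸ sq.range),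
        ((R * A : G) : G ⧸ sq.range), ((g : G) : G ⧸ sq.range)} : Finset (G ⧸ sq.range)).card = 5 := by
      rw [Finset.card_insert_of_notMem, Finset.card_insert_of_notMem, Finset.card_insert_of_notMem,
        Finset.card_insert_of_notMem, Finset.card_singleton]
      all_goals simp only [Finset.mem_insert, Finset.mem_singleton, not_or]
      all_goals tauto
    have := Fintype.ofFinite (G ⧸ sq.range)
    have h5 := Finset.card_le_univ ({((1 : G) : G ⧸ sq.range), ((A : G) : G ⧸ sq.range),
      ((R : G) : G ⧸ sq.range), ((R * A : G) : G ⧸ sq.range), ((g : G) : G ⧸ sq.range)} : Finset (G ⧸ sq.range))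
    rw [hc] at h5
    have : sq.range.index = Fintype.card (G ⧸ sq.range) := by
      rw [Subgroup.index, Nat.card_eq_fintype_card]
    omega
  -- R not a power of A
  have hRA : ∀ k : ℤ, R ≠ A ^ k := by
    intro k h
    rcases Int.even_or_odd' k with ⟨j, hj | hj⟩
    · exact nR (A ^ j) (by rw [h, hj, ← zpow_natCast, ← zpow_mul]; congr 1; push_cast; ring)
    · apply nRA (A ^ (j + 1))
      rw [h, hj, ← zpow_natCast, ← zpow_mul, ← zpow_add_one]; congr 1; push_cast; ring
  have hR1 : R ≠ 1 := by simpa using hRA 0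
  let fR : ZMod 2 →+ Additive G := ZMod.lift 2 ⟨zmultiplesHom (Additive G) (Additive.ofMul R), by
    show ((2 : ℕ) : ℤ) • Additive.ofMul R = 0
    rw [natCast_zsmul, ← ofMul_pow, hR]; rfl⟩
  let fA : ZMod (2 ^ ℓ) →+ Additive G := ZMod.lift (2 ^ ℓ) ⟨zmultiplesHom (Additive G) (Additive.ofMul A), by
    show ((2 ^ ℓ : ℕ) : ℤ) • Additive.ofMul A = 0
    rw [natCast_zsmul, ← ofMul_pow, hA]; rfl⟩
  let f : ZMod 2 × ZMod (2 ^ ℓ) →+ Additive G := fR.coprod fA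
  have hf : ∀ x y : ℤ, f ((x : ZMod 2), (y : ZMod (2 ^ ℓ))) = Additive.ofMul (R ^ x * A ^ y) := by
    intro x y
    simp only [f, AddMonoidHom.coprod_apply, fR, fA, ZMod.lift_coe]
    rfl
  have hfinj : Function.Injective f := by
    rw [injective_iff_map_eq_zero]
    rintro ⟨a, b⟩ hab
    obtain ⟨x, rfl⟩ := ZMod.intCast_surjective a
    obtain ⟨y, rfl⟩ := ZMod.intCast_surjective b
    rw [hf] at hab
    have h1 : R ^ x * A ^ y = 1 := hab
    have hx : (2 : ℤ) ∣ x := by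
      rcases Int.even_or_odd' x with ⟨j, hj | hj⟩
      · exact ⟨j, hj⟩
      · exfalso
        have h2 : R ^ x = R := by
          rw [hj, zpow_add_one, zpow_mul]
          have : R ^ (2 : ℤ) = 1 := by exact_mod_cast hR
          rw [this]; simp
        rw [h2] at h1
        apply hRA (-y)
        rw [zpow_neg]; exact eq_inv_of_mul_eq_one_left h1
    have h2 : R ^ x = 1 := by
      obtain ⟨j, rfl⟩ := hx
      rw [zpow_mul]
      have : R ^ (2 : ℤ) = 1 := by exact_mod_cast hR
      rw [this]; simp
    rw [h2, one_mul] at h1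
    have h3 : ((2 ^ ℓ : ℕ) : ℤ) ∣ y := by rw [← hoA]; exact orderOf_dvd_iff_zpow_eq_one.mpr h1
    ext
    · exact (ZMod.intCast_zmod_eq_zero_iff_dvd x 2).mpr (by exact_mod_cast hx)
    · exact (ZMod.intCast_zmod_eq_zero_iff_dvd y (2 ^ ℓ)).mpr h3
  let F : Multiplicative (ZMod 2 × ZMod (2 ^ ℓ)) →* G := AddMonoidHom.toMultiplicativeLeft f
  have hFinj : Function.Injective F := hfinj
  have hF : ∀ x y : ℤ, R ^ x * A ^ y ∈ F.range := fun x y =>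
    ⟨Multiplicative.ofAdd ((x : ZMod 2), (y : ZMod (2 ^ ℓ))), hf x y⟩
  let e := MonoidHom.ofInjective hFinj
  have hcard : Nat.card F.range = 2 ^ (ℓ + 1) := by
    rw [← Nat.card_congr e.toEquiv]
    show Nat.card (ZMod 2 × ZMod (2 ^ ℓ)) = _
    rw [Nat.card_prod, Nat.card_zmod, Nat.card_zmod, pow_succ, mul_comm]
  have hp : IsPGroup 2 F.range := IsPGroup.of_card hcard
  have hndvd : ¬ 2 ∣ F.range.index := by
    intro h
    obtain ⟨x, hx⟩ := exists_prime_orderOf_dvd_card' (G := G ⧸ F.range) 2 h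
    have hsurj : Function.Surjective (fun z : G ⧸ F.range => z ^ 2) := by
      intro z
      obtain ⟨g, rfl⟩ := QuotientGroup.mk_surjective z
      have hmA : A ∈ F.range := by simpa using hF 0 1
      have hmR : R ∈ F.range := by simpa using hF 1 0
      obtain ⟨s, hs⟩ := hcov g
      have : ∃ t ∈ F.range, g = t * s ^ 2 := by
        rcases hs with hs | hs | hs | hs
        · exact ⟨1, one_mem _, by simpa using hs⟩
        · exact ⟨_, hmA, hs⟩
        · exact ⟨_, hmR, hs⟩
        · exact ⟨_, mul_mem hmR hmA, hs⟩
      obtain ⟨t, ht, hg⟩ := this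
      refine ⟨(s : G ⧸ F.range), ?_⟩
      rw [hg, QuotientGroup.mk_mul, (QuotientGroup.eq_one_iff t).mpr ht, one_mul]
      rfl
    have hinj := Finite.injective_iff_surjective.mpr hsurj
    have : x = 1 := hinj (by
      have h1 := pow_orderOf_eq_one x
      rw [hx] at h1
      simpa using h1)
    rw [this, orderOf_one] at hx
    norm_num at hx
  exact ⟨(Sylow.equiv P (hp.toSylow hndvd)).trans e.symm⟩

theorem aux_idealR (k : ℤ) (ω : O) (hω : ω ^ 2 = -((4 * k + 1 : ℤ) : O)) :
    (Ideal.span {(2 : O), 1 + ω}) ^ 2 = Ideal.span {(2 : O)} := by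
  rw [pow_two, Ideal.span_pair_mul_span_pair]
  push_cast at hω
  apply le_antisymm
  · rw [Ideal.span_le]
    rintro x (rfl | rfl | rfl | rfl)
    · exact Ideal.mem_span_singleton.mpr ⟨2, by ring⟩
    · exact Ideal.mem_span_singleton.mpr ⟨1 + ω, by ring⟩
    · exact Ideal.mem_span_singleton.mpr ⟨1 + ω, by ring⟩
    · exact Ideal.mem_span_singleton.mpr ⟨ω - 2 * k, by linear_combination hω⟩
  · rw [Ideal.span_singleton_le_iff_mem]
    have h : (2 : O) = (-k : O) * (2 * 2) + (1 : O) * (2 * (1 + ω)) + (-1 : O) * ((1 + ω) * (1 + ω)) := by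
      linear_combination hω
    have h2 : (-k : O) * (2 * 2) + (1 : O) * (2 * (1 + ω)) + (-1 : O) * ((1 + ω) * (1 + ω)) ∈
        Ideal.span {(2 : O) * 2, 2 * (1 + ω), (1 + ω) * 2, (1 + ω) * (1 + ω)} :=
      Ideal.add_mem _ (Ideal.add_mem _ (Ideal.mul_mem_left _ _ (Ideal.subset_span (by simp)))
        (Ideal.mul_mem_left _ _ (Ideal.subset_span (by simp))))
        (Ideal.mul_mem_left _ _ (Ideal.subset_span (by simp)))
    rw [← h] at h2
    exact h2

theorem aux_idealS (p q : ℤ) (hpq : IsCoprime p q) (ω : O) (hω : ω ^ 2 = -((p * q : ℤ) : O)) :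
    (Ideal.span {(p : O), ω}) ^ 2 = Ideal.span {(p : O)} := by
  obtain ⟨u, v, huv⟩ := hpq
  have huv' : (u : O) * p + v * q = 1 := by exact_mod_cast congrArg (Int.cast : ℤ → O) huv
  push_cast at hω
  rw [pow_two, Ideal.span_pair_mul_span_pair]
  apply le_antisymm
  · rw [Ideal.span_le]
    rintro x (rfl | rfl | rfl | rfl)
    · exact Ideal.mem_span_singleton.mpr ⟨p, by ring⟩
    · exact Ideal.mem_span_singleton.mpr ⟨ω, by ring⟩
    · exact Ideal.mem_span_singleton.mpr ⟨ω, by ring⟩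
    · exact Ideal.mem_span_singleton.mpr ⟨- q, by linear_combination hω⟩
  · rw [Ideal.span_singleton_le_iff_mem]
    have h : (p : O) = (u : O) * (p * p) + (-v : O) * (ω * ω) := by
      linear_combination v * hω - p * huv'
    have h2 : (u : O) * (p * p) + (-v : O) * (ω * ω) ∈ Ideal.span {(p : O) * p, p * ω, ω * p, ω * ω} :=
      Ideal.add_mem _ (Ideal.mul_mem_left _ _ (Ideal.subset_span (by simp)))
        (Ideal.mul_mem_left _ _ (Ideal.subset_span (by simp)))
    rw [← h] at h2
    exact h2

theorem aux_idealSS (p q : ℤ) (hpq : IsCoprime p q) (ω : O) (hω : ω ^ 2 = -((p * q : ℤ) : O)) :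
    (Ideal.span {(p : O), ω}) * (Ideal.span {(q : O), ω}) = Ideal.span {ω} := by
  obtain ⟨u, v, huv⟩ := hpq
  have huv' : (u : O) * p + v * q = 1 := by exact_mod_cast congrArg (Int.cast : ℤ → O) huv
  push_cast at hω
  rw [Ideal.span_pair_mul_span_pair]
  apply le_antisymm
  · rw [Ideal.span_le]
    rintro x (rfl | rfl | rfl | rfl)
    · exact Ideal.mem_span_singleton.mpr ⟨-ω, by linear_combination hω⟩
    · exact Ideal.mem_span_singleton.mpr ⟨p, by ring⟩
    · exact Ideal.mem_span_singleton.mpr ⟨q, by ring⟩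
    · exact Ideal.mem_span_singleton.mpr ⟨ω, by ring⟩
  · rw [Ideal.span_singleton_le_iff_mem]
    have h : ω = (u : O) * (p * ω) + (v : O) * (ω * q) := by
      linear_combination - ω * huv'
    have h2 : (u : O) * (p * ω) + (v : O) * (ω * q) ∈ Ideal.span {(p : O) * q, p * ω, ω * q, ω * ω} := 
      Ideal.add_mem _ (Ideal.mul_mem_left _ _ (Ideal.subset_span (by simp)))
        (Ideal.mul_mem_left _ _ (Ideal.subset_span (by simp)))
    rw [← h] at h2
    exact h2

theorem aux_mem (I : Ideal O) (a : O) (ha : a ≠ 0) (h : I ^ 2 = Ideal.span {a}) : I ∈ (Ideal O)⁰ := by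
  rw [mem_nonZeroDivisors_iff_ne_zero]
  rintro rfl
  apply ha
  have : (0 : Ideal O) ^ 2 = 0 := by simp
  rw [this] at h
  simpa using h.symm

theorem aux_main [Finite (ClassGroup O)] (ℓ : ℕ) (hℓ : 2 ≤ ℓ)
    (m : ℕ) (hm0 : 0 < m) (hm : Odd m) (w : ℕ) (hw : w = 3 * m ^ 2)
    (p₁ p₂ : ℕ) (hp₁ : p₁.Prime) (hp₂ : p₂.Prime)
    (h₁ : p₁ % 24 = 11) (h₂ : p₂ % 24 = 7)
    (hsum : p₁ + p₂ = 2 * w ^ 2 ^ (ℓ - 1)) (ω : O)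
    (hω : ω ^ 2 = -((p₁ * p₂ : ℤ) : O))
    (hrep : ∀ z : O, ∃ x y : ℤ, z = x + y * ω)
    (hnorm : ∀ x y : ℤ, (Ideal.absNorm (Ideal.span {(x : O) + y * ω}) : ℤ) = x ^ 2 + (p₁ * p₂ : ℤ) * y ^ 2)
    (hinj : ∀ x y : ℤ, (x : O) + y * ω = 0 → x = 0 ∧ y = 0)
    (P : Sylow 2 (ClassGroup O)) :
    Nonempty ((P : Subgroup (ClassGroup O)) ≃* Multiplicative (ZMod 2 × ZMod (2 ^ ℓ))) := by
  have hne : p₁ ≠ p₂ := by omega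
  have hcop : IsCoprime (p₁ : ℤ) (p₂ : ℤ) := Nat.isCoprime_iff_coprime.mpr ((Nat.coprime_primes hp₁ hp₂).mpr hne)
  have hint : ∀ x : ℤ, x ≠ 0 → (x : O) ≠ 0 := fun x hx h => hx (hinj x 0 (by simpa using h)).1
  have hp10 : (p₁ : ℤ) ≠ 0 := by exact_mod_cast hp₁.ne_zero
  have hp20 : (p₂ : ℤ) ≠ 0 := by exact_mod_cast hp₂.ne_zero
  have hω0 : ω ≠ 0 := by
    intro h
    have := (hinj 0 1 (by simp [h])).2
    omega
  -- the ramified ideals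
  have hR2 : (Ideal.span {(2 : O), 1 + ω}) ^ 2 = Ideal.span {((2 : ℤ) : O)} := by
    obtain ⟨k, hk⟩ : ∃ k : ℤ, (p₁ * p₂ : ℤ) = 4 * k + 1 := by
      have e1 : (p₁ : ℤ) = 4 * (p₁ / 4 : ℕ) + 3 := by omega
      have e2 : (p₂ : ℤ) = 4 * (p₂ / 4 : ℕ) + 3 := by omega
      refine ⟨4 * (p₁ / 4 : ℕ) * (p₂ / 4 : ℕ) + 3 * (p₁ / 4 : ℕ) + 3 * (p₂ / 4 : ℕ) + 2, ?_⟩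
      rw [e1, e2]
      generalize (p₁ / 4 : ℕ) = a
      generalize (p₂ / 4 : ℕ) = b
      ring_nf
    rw [hk] at hω
    exact_mod_cast aux_idealR k ω hω
  have hS2 := aux_idealS (p₁ : ℤ) p₂ hcop ω hω
  have hT2 := aux_idealS (p₂ : ℤ) p₁ hcop.symm ω (by rw [mul_comm (p₂ : ℤ)]; exact hω)
  have hST := aux_idealSS (p₁ : ℤ) p₂ hcop ω hω
  let R : (Ideal O)⁰ := ⟨_, aux_mem _ _ (hint 2 (by norm_num)) hR2⟩
  let S : (Ideal O)⁰ := ⟨_, aux_mem _ _ (hint p₁ hp10) hS2⟩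
  let T : (Ideal O)⁰ := ⟨_, aux_mem _ _ (hint p₂ hp20) hT2⟩
  have hRc : (R : Ideal O) ^ 2 = Ideal.span {((2 : ℤ) : O)} := hR2
  have hSc : (S : Ideal O) ^ 2 = Ideal.span {((p₁ : ℤ) : O)} := hS2
  have hTc : (T : Ideal O) ^ 2 = Ideal.span {((p₂ : ℤ) : O)} := hT2
  have hSTc : (S : Ideal O) * T = Ideal.span {ω} := hST
  clear_value R S T
  have cR : ClassGroup.mk0 R ^ 2 = 1 := by
    rw [← map_pow]; exact aux_one _ _ (by rw [SubmonoidClass.coe_pow, hRc])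
  have cS : ClassGroup.mk0 S ^ 2 = 1 := by
    rw [← map_pow]; exact aux_one _ _ (by rw [SubmonoidClass.coe_pow, hSc])
  have cST : ClassGroup.mk0 S * ClassGroup.mk0 T = 1 := by
    rw [← map_mul]; exact aux_one _ _ (by rw [Submonoid.coe_mul, hSTc])
  have cT : ClassGroup.mk0 T = ClassGroup.mk0 S := by
    have : ClassGroup.mk0 S * ClassGroup.mk0 T = ClassGroup.mk0 S * ClassGroup.mk0 S := by
      rw [cST, ← pow_two, cS]
    exact mul_left_cancel this
  -- torsion
  have htor : ∀ g : ClassGroup O, g ^ 2 = 1 → g = 1 ∨ g = ClassGroup.mk0 S ∨ g = ClassGroup.mk0 R ∨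
      g = ClassGroup.mk0 R * ClassGroup.mk0 S := by
    intro g hg
    obtain ⟨J, a, rfl, hJa⟩ := aux_amb _ ω hω hrep hnorm hinj g hg
    obtain ⟨n, J', e, hn0, hJJ, hJe, hed⟩ := aux_prim _ ω hω hrep hinj (J : Ideal O)
      (nonZeroDivisors.coe_ne_zero J) a hJa
    have he : Ideal.span {(e : O)} = Ideal.span {((e.natAbs : ℤ) : O)} := by
      rcases Int.natAbs_eq e with h | h
      · rw [← h]
      · conv_lhs => rw [h]
        rw [Int.cast_neg, Ideal.span_singleton_neg]
    have hed' : e.natAbs ∣ 2 * (p₁ * p₂) := by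
      rw [← Int.natCast_dvd_natCast, Int.natAbs_dvd]
      exact_mod_cast hed
    obtain ⟨x, x', hx, hx', hxx⟩ := (Nat.dvd_mul).mp hed'
    obtain ⟨y, z, hy, hz, hyz⟩ := (Nat.dvd_mul).mp hx'
    have key : ∀ (p : ℕ) (hp : p.Prime) (x : ℕ) (Q : (Ideal O)⁰), x ∣ p → (Q : Ideal O) ^ 2 = Ideal.span {((p : ℤ) : O)} →
        ∃ X : (Ideal O)⁰, (X = 1 ∨ X = Q) ∧ (X : Ideal O) ^ 2 = Ideal.span {((x : ℤ) : O)} := by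
      intro p hp x Q hx hQ
      rcases (Nat.dvd_prime hp).mp hx with rfl | rfl
      · exact ⟨1, Or.inl rfl, by simp⟩
      · exact ⟨Q, Or.inr rfl, hQ⟩
    obtain ⟨X, hX, hX2⟩ := key 2 Nat.prime_two x R hx hRc
    obtain ⟨Y, hY, hY2⟩ := key p₁ hp₁ y S hy hSc
    obtain ⟨Z, hZ, hZ2⟩ := key p₂ hp₂ z T hz hTc
    have hJ' : J' = (X : Ideal O) * (Y * Z) := by
      apply aux_sq_inj
      rw [hJe, he, mul_pow, mul_pow, hX2, hY2, hZ2, Ideal.span_singleton_mul_span_singleton,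
        Ideal.span_singleton_mul_span_singleton, ← hxx, ← hyz]
      push_cast
      rfl
    have hnm : Ideal.span {n} ∈ (Ideal O)⁰ := by
      rw [mem_nonZeroDivisors_iff_ne_zero]
      simpa using hn0
    have hJf : J = ⟨Ideal.span {n}, hnm⟩ * (X * (Y * Z)) := by
      apply Subtype.ext
      rw [hJJ, hJ']
      rfl
    rw [hJf, map_mul, aux_one ⟨Ideal.span {n}, hnm⟩ n rfl, one_mul, map_mul, map_mul]
    rw [pow_two] at cS
    rcases hX with rfl | rfl <;> rcases hY with rfl | rfl <;> rcases hZ with rfl | rfl <;>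
      simp [cT, cS]
  -- the ideal A
  set u : ℤ := ((w ^ 2 ^ (ℓ - 1) : ℕ) : ℤ) with hu
  obtain ⟨t, ht⟩ : ∃ t : ℤ, t = p₁ - u := ⟨_, rfl⟩
  have e1 : (p₁ : ℤ) = u + t := by rw [ht]; ring
  have hsumz : (p₁ : ℤ) + p₂ = 2 * u := by rw [hu]; exact_mod_cast hsum
  have e2 : (p₂ : ℤ) = u - t := by linarith
  have hpow : 2 ^ ℓ = 2 ^ (ℓ - 1) * 2 := by
    rw [← pow_succ]; congr 1; omega
  have hu2 : (w : ℤ) ^ 2 ^ ℓ = u ^ 2 := by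
    rw [hpow, pow_mul, hu]; push_cast; rfl
  have hdt : t ^ 2 + (p₁ * p₂ : ℤ) = u ^ 2 := by rw [e1, e2]; ring
  have hwodd : Odd w := by rw [hw]; exact (by decide : Odd 3).mul hm.pow
  have huodd : Odd u := by
    rw [hu]; exact_mod_cast hwodd.pow
  have hco : IsCoprime (2 * t) (u ^ 2) := by
    apply IsCoprime.pow_right
    apply IsCoprime.mul_left
    · obtain ⟨k, hk⟩ := huodd
      exact ⟨-k, 1, by rw [hk]; ring⟩
    · obtain ⟨a, b, hab⟩ := hcop
      refine ⟨a - b, a + b, ?_⟩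
      rw [← hab, e1, e2]; ring
  have hωt : ω ^ 2 = (t : O) ^ 2 - (u : O) ^ 2 := by
    rw [hω]
    have := congrArg (Int.cast : ℤ → O) hdt
    push_cast at this ⊢
    linear_combination -this
  have hwO : (w : O) ^ 2 ^ ℓ = (u : O) ^ 2 := by exact_mod_cast congrArg (Int.cast : ℤ → O) hu2
  obtain ⟨A', hA'⟩ : ∃ A' : Ideal O, Ideal.span {(t : O) + ω} = A' ^ 2 ^ ℓ := by
    classical
    let _ : GCDMonoid (Ideal O) := UniqueFactorizationMonoid.toGCDMonoid _
    apply exists_eq_pow_of_mul_eq_pow_of_coprime (b := Ideal.span {(t : O) - ω}) (c := Ideal.span {(w : O)})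
    · rw [Ideal.isCoprime_span_singleton_iff]
      obtain ⟨r, s, hrs⟩ := hco
      have hrs' := congrArg (Int.cast : ℤ → O) hrs
      push_cast at hrs'
      refine ⟨r + s * (t - ω), r, ?_⟩
      linear_combination hrs' - s * hωt
    · rw [Ideal.span_singleton_mul_span_singleton, Ideal.span_singleton_pow, hwO]
      congr 2
      linear_combination - hωt
  have hNA' : Ideal.absNorm A' = w := by
    have h1 := hnorm t 1
    rw [Int.cast_one, one_mul, hA', map_pow, one_pow, mul_one, hdt, ← hu2] at h1
    have h2 : Ideal.absNorm A' ^ 2 ^ ℓ = w ^ 2 ^ ℓ := by exact_mod_cast h1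
    exact Nat.pow_left_injective (by positivity) h2
  have hA0 : A' ∈ (Ideal O)⁰ := by
    rw [mem_nonZeroDivisors_iff_ne_zero]
    intro h
    rw [h, Ideal.zero_eq_bot, Ideal.absNorm_bot] at hNA'
    rw [hw] at hNA'
    have : 0 < 3 * m ^ 2 := by positivity
    omega
  obtain ⟨A, hAA⟩ : ∃ A : (Ideal O)⁰, (A : Ideal O) = A' := ⟨⟨A', hA0⟩, rfl⟩
  rw [← hAA] at hA' hNA'
  have cA : ClassGroup.mk0 A ^ 2 ^ ℓ = 1 := by
    rw [← map_pow]; exact aux_one _ _ (by rw [SubmonoidClass.coe_pow, hA'])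
  have hp1g : (11 : ℤ) ≤ p₁ := by omega
  have hp2g : (7 : ℤ) ≤ p₂ := by omega
  have cA' : ClassGroup.mk0 A ^ 2 ^ (ℓ - 1) ≠ 1 := by
    intro h
    rw [← map_pow] at h
    obtain ⟨z, hz⟩ := aux_principal _ h
    obtain ⟨x, y, rfl⟩ := hrep z
    rw [SubmonoidClass.coe_pow] at hz
    have h1 := hnorm x y
    rw [← hz, map_pow, hNA', ← hu] at h1
    have hy : y = 0 := by
      by_contra hy
      have : 1 ≤ y ^ 2 := by have : 0 < y ^ 2 := by positivity
                             omega
      have hpp : (p₁ : ℤ) * p₂ ≤ p₁ * p₂ * y ^ 2 := le_mul_of_one_le_right (by positivity) this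
      nlinarith [sq_nonneg x]
    subst hy
    have hx : x ^ 2 = u := by rw [h1]; ring
    rw [hpow, pow_mul, hz, Ideal.span_singleton_pow] at hA'
    have h2 : (t : O) + ω ∈ Ideal.span {((x : O) + ((0 : ℤ) : O) * ω) ^ 2} := by
      rw [← hA']; exact Ideal.mem_span_singleton_self _
    obtain ⟨c, hc⟩ := Ideal.mem_span_singleton.mp h2
    obtain ⟨r, s, rfl⟩ := hrep c
    have h3 := (hinj (t - x ^ 2 * r) (1 - x ^ 2 * s) (by push_cast at hc ⊢; linear_combination hc)).2
    rw [hx] at h3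
    have h4 : u ∣ 1 := ⟨s, by linarith⟩
    have := Int.le_of_dvd (by norm_num) h4
    linarith
  -- norms
  have hNR : (Ideal.absNorm (R : Ideal O) : ℤ) = 2 * 1 ^ 2 := by
    have h1 := hnorm 2 0
    have h2 : Ideal.span {((2 : ℤ) : O) + ((0 : ℤ) : O) * ω} = (R : Ideal O) ^ 2 := by
      rw [hRc]; simp
    rw [h2, map_pow] at h1
    push_cast at h1
    nlinarith
  have hm0' : (m : ℤ) ≠ 0 := by positivity
  have hNA : (Ideal.absNorm (A : Ideal O) : ℤ) = 3 * (m : ℤ) ^ 2 := by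
    rw [hNA', hw]; push_cast; ring
  have hNRA : (Ideal.absNorm ((R * A : (Ideal O)⁰) : Ideal O) : ℤ) = 6 * (m : ℤ) ^ 2 := by
    rw [Submonoid.coe_mul, map_mul, Nat.cast_mul, hNA, hNR]; ring
  have hd12 : ¬ (p₁ : ℤ) ∣ p₂ := by
    rw [Int.natCast_dvd_natCast, Nat.prime_dvd_prime_iff_eq hp₁ hp₂]; exact hne
  have hd21 : ¬ (p₂ : ℤ) ∣ p₁ := by
    rw [Int.natCast_dvd_natCast, Nat.prime_dvd_prime_iff_eq hp₂ hp₁]; exact hne.symm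
  refine aux_group ℓ (by omega) (ClassGroup.mk0 A) (ClassGroup.mk0 R) (ClassGroup.mk0 S) htor cR cA cA' ?_ ?_ ?_ P
  · apply aux_nonsq _ ω hrep hnorm 3 _ A m hm0' hNA
    intro x y z hz
    have := aux_descent p₂ hp₂ p₁ hd21 3 (by exact_mod_cast aux_res3_2 p₂ hp₂ h₂) _ x y z le_rfl hz
    rwa [mul_comm (p₂ : ℤ)] at this
  · apply aux_nonsq _ ω hrep hnorm 2 _ R 1 one_ne_zero hNR
    intro x y z hz
    exact aux_descent p₁ hp₁ p₂ hd12 2 (by exact_mod_cast aux_res2 p₁ hp₁ h₁) _ x y z le_rfl hz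
  · rw [← map_mul]
    apply aux_nonsq _ ω hrep hnorm 6 _ (R * A) m hm0' hNRA
    intro x y z hz
    exact aux_descent p₁ hp₁ p₂ hd12 6 (by exact_mod_cast aux_res6 p₁ hp₁ h₁) _ x y z le_rfl hz

end

end

theorem aux_field (d : ℕ) (hd : 0 < d) (K : Type) [Field K] [NumberField K] (α : K)
    (hα : α ^ 2 = -(d : K)) (htop : IntermediateField.adjoin ℚ {α} = ⊤) :
    (∀ z : K, ∃ a b : ℚ, z = a + b * α) ∧ (∀ a b : ℚ, (a : K) + b * α = 0 → a = 0 ∧ b = 0) ∧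
    (∀ a b : ℚ, Algebra.norm ℚ ((a : K) + b * α) = a ^ 2 + d * b ^ 2) ∧
    (∀ a b : ℚ, Algebra.trace ℚ K ((a : K) + b * α) = 2 * a) := by
  have hlin : ∀ a b : ℚ, (a : K) + b * α = 0 → a = 0 ∧ b = 0 := by
    intro a b h
    have hsq : (a : K) ^ 2 + d * (b : K) ^ 2 = 0 := by
      linear_combination ((a : K) - b * α) * h + (b : K) ^ 2 * hα
    have hsq' : a ^ 2 + d * b ^ 2 = 0 := by exact_mod_cast hsq
    have hd' : (0 : ℚ) < d := by exact_mod_cast hd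
    have h1 := sq_nonneg a
    have h2 := mul_nonneg hd'.le (sq_nonneg b)
    have ha : a ^ 2 = 0 := by linarith
    have hb : d * b ^ 2 = 0 := by linarith
    refine ⟨by simpa using ha, ?_⟩
    rcases mul_eq_zero.mp hb with h | h
    · exact absurd h hd'.ne'
    · simpa using h
  have hspan : ∀ z : K, ∃ a b : ℚ, z = a + b * α := by
    intro z
    have hz : z ∈ IntermediateField.adjoin ℚ {α} := by rw [htop]; trivial
    induction hz using IntermediateField.adjoin_induction with
    | mem x hx =>
      rw [Set.mem_singleton_iff] at hx
      exact ⟨0, 1, by simp [hx]⟩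
    | algebraMap x => exact ⟨x, 0, by simp⟩
    | add x y _ _ hx hy =>
      obtain ⟨a, b, rfl⟩ := hx
      obtain ⟨a', b', rfl⟩ := hy
      exact ⟨a + a', b + b', by push_cast; ring⟩
    | mul x y _ _ hx hy =>
      obtain ⟨a, b, rfl⟩ := hx
      obtain ⟨a', b', rfl⟩ := hy
      exact ⟨a * a' - d * b * b', a * b' + b * a', by
        push_cast; linear_combination (b : K) * b' * hα⟩
    | inv x _ hx =>
      obtain ⟨a, b, rfl⟩ := hx
      by_cases h0 : (a : K) + b * α = 0
      · exact ⟨0, 0, by rw [h0]; simp⟩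
      · have hn : a ^ 2 + d * b ^ 2 ≠ 0 := by
          intro h
          have hd' : (0 : ℚ) < d := by exact_mod_cast hd
          have h1 := sq_nonneg a
          have h2 := mul_nonneg hd'.le (sq_nonneg b)
          have ha : a ^ 2 = 0 := by linarith
          have hb : d * b ^ 2 = 0 := by linarith
          have ha' : a = 0 := by simpa using ha
          have hb' : b = 0 := by
            rcases mul_eq_zero.mp hb with h | h
            · exact absurd h hd'.ne'
            · simpa using h
          apply h0
          simp [ha', hb']
        have hn' : (a : K) ^ 2 + d * (b : K) ^ 2 ≠ 0 := by exact_mod_cast hn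
        refine ⟨a / (a ^ 2 + d * b ^ 2), -b / (a ^ 2 + d * b ^ 2), ?_⟩
        apply inv_eq_of_mul_eq_one_left
        push_cast
        field_simp
        linear_combination -(b : K) ^ 2 * hα
  have hli : LinearIndependent ℚ ![(1 : K), α] := by
    rw [LinearIndependent.pair_iff]
    intro s t h
    apply hlin
    simpa [Algebra.smul_def] using h
  let B : Module.Basis (Fin 2) ℚ K := Module.Basis.mk hli (by
    intro z _
    obtain ⟨a, b, rfl⟩ := hspan z
    rw [Matrix.range_cons, Matrix.range_cons, Matrix.range_empty, Set.union_empty]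
    rw [Set.singleton_union, Submodule.mem_span_pair]
    exact ⟨a, b, by simp [Algebra.smul_def]⟩)
  have hB0 : B 0 = 1 := by simp [B]
  have hB1 : B 1 = α := by simp [B]
  have hr : ∀ a b : ℚ, B.repr ((a : K) + b * α) = Finsupp.single 0 a + Finsupp.single 1 b := by
    intro a b
    have : (a : K) + b * α = a • B 0 + b • B 1 := by
      rw [hB0, hB1]; simp [Algebra.smul_def]
    rw [this, map_add, map_smul, map_smul, B.repr_self, B.repr_self]
    simp
  have hM : ∀ a b : ℚ, Algebra.leftMulMatrix B ((a : K) + b * α) = !![a, -d * b; b, a] := by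
    intro a b
    have e0 : ((a : K) + b * α) * B 0 = (a : K) + b * α := by rw [hB0, mul_one]
    have e1 : ((a : K) + b * α) * B 1 = ((-d * b : ℚ) : K) + (a : ℚ) * α := by
      rw [hB1]; push_cast; linear_combination (b : K) * hα
    ext i j
    rw [Algebra.leftMulMatrix_eq_repr_mul]
    fin_cases j
    · simp only [Fin.zero_eta]
      rw [e0, hr]
      fin_cases i <;> simp
    · simp only [Fin.mk_one]
      rw [e1, hr]
      fin_cases i <;> simp
  refine ⟨hspan, hlin, ?_, ?_⟩
  · intro a b
    rw [Algebra.norm_eq_matrix_det B, hM, Matrix.det_fin_two_of]; ring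
  · intro a b
    rw [Algebra.trace_eq_matrix_trace B, hM, Matrix.trace_fin_two_of]; ring

theorem aux_rat (d : ℕ) (hsf : Squarefree d) (r : ℚ) (M : ℤ) (h : d * r ^ 2 = M) :
    ∃ k : ℤ, r = k := by
  have hq : (r.den : ℤ) ≠ 0 := by exact_mod_cast r.den_ne_zero
  have h1 : (d : ℤ) * r.num ^ 2 = M * (r.den : ℤ) ^ 2 := by
    have h2 : (d : ℚ) * (r.num : ℚ) ^ 2 = M * (r.den : ℚ) ^ 2 := by
      have h3 : (r.num : ℚ) = r * r.den := (Rat.mul_den_eq_num r).symm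
      rw [h3]; linear_combination (r.den : ℚ) ^ 2 * h
    exact_mod_cast h2
  have hc : IsCoprime ((r.den : ℤ) ^ 2) (r.num ^ 2) := by
    apply IsCoprime.pow
    have := r.reduced
    rw [Int.isCoprime_iff_gcd_eq_one]
    rw [Nat.Coprime, Nat.gcd_comm] at this
    simpa [Int.gcd] using this
  have h2 : (r.den : ℤ) ^ 2 ∣ d := hc.dvd_of_dvd_mul_right ⟨M, by rw [h1]; ring⟩
  have h3 : r.den * r.den ∣ d := by
    rw [← pow_two]; exact_mod_cast h2
  have h4 := Nat.isUnit_iff.mp (hsf _ h3)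
  exact ⟨r.num, (Rat.coe_int_num_of_den_eq_one h4).symm⟩

theorem aux_int (d : ℕ) (hd4 : d % 4 = 1) (hsf : Squarefree d) (a b : ℚ) (T M : ℤ)
    (hT : 2 * a = T) (hM : a ^ 2 + d * b ^ 2 = M) : ∃ x y : ℤ, a = x ∧ b = y := by
  obtain ⟨B, hB⟩ := aux_rat d hsf (2 * b) (4 * M - T ^ 2) (by
    push_cast; rw [← hM, ← hT]; ring)
  have h1 : T ^ 2 + d * B ^ 2 = 4 * M := by
    have : (T : ℚ) ^ 2 + d * (B : ℚ) ^ 2 = 4 * M := by rw [← hM, ← hT, ← hB]; ring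
    exact_mod_cast this
  obtain ⟨k, hk⟩ : ∃ k : ℤ, (d : ℤ) = 4 * k + 1 := ⟨(d / 4 : ℕ), by omega⟩
  rw [hk] at h1
  have h2 : T ^ 2 + B ^ 2 = 4 * (M - k * B ^ 2) := by linear_combination h1
  have hpar : Even T ∧ Even B := by
    rcases Int.even_or_odd' T with ⟨x, hx | hx⟩ <;> rcases Int.even_or_odd' B with ⟨y, hy | hy⟩
    · exact ⟨⟨x, by omega⟩, ⟨y, by omega⟩⟩
    all_goals
      exfalso
      generalize M - k * B ^ 2 = c at h2
      subst hx hy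
      ring_nf at h2
      omega
  obtain ⟨⟨x, hx⟩, ⟨y, hy⟩⟩ := hpar
  refine ⟨x, y, ?_, ?_⟩
  · rw [hx] at hT; push_cast at hT; linarith
  · rw [hy] at hB; push_cast at hB; linarith

theorem aux_ring (d : ℕ) (hd4 : d % 4 = 1) (hsf : Squarefree d) (K : Type) [Field K] [NumberField K] (α : K)
    (hα : α ^ 2 = -(d : K)) (htop : IntermediateField.adjoin ℚ {α} = ⊤) :
    ∃ ω : NumberField.RingOfIntegers K, ω ^ 2 = -(((d : ℤ)) : NumberField.RingOfIntegers K) ∧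
    (∀ z : NumberField.RingOfIntegers K, ∃ x y : ℤ, z = x + y * ω) ∧
    (∀ x y : ℤ, (Ideal.absNorm (Ideal.span {(x : NumberField.RingOfIntegers K) + y * ω}) : ℤ) = x ^ 2 + (d : ℤ) * y ^ 2) ∧
    (∀ x y : ℤ, (x : NumberField.RingOfIntegers K) + y * ω = 0 → x = 0 ∧ y = 0) := by
  obtain ⟨hspan, hlin, hnorm, htr⟩ := aux_field d (by omega) K α hα htop
  have hint : IsIntegral ℤ α := by
    apply IsIntegral.of_pow (n := 2) (by norm_num)
    rw [hα]
    exact (isIntegral_algebraMap (R := ℤ) (x := (d : ℤ)) |>.neg) |> fun h => by simpa using h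
  let ω : NumberField.RingOfIntegers K := ⟨α, hint⟩
  have hωα : (ω : K) = α := rfl
  refine ⟨ω, ?_, ?_, ?_, ?_⟩
  · apply NumberField.RingOfIntegers.coe_injective
    push_cast
    exact hα
  · intro z
    obtain ⟨a, b, hab⟩ := hspan z
    have h1 := Algebra.coe_norm_int z
    have h2 := Algebra.coe_trace_int z
    rw [hab, hnorm] at h1
    rw [hab, htr] at h2
    obtain ⟨x, y, rfl, rfl⟩ := aux_int d hd4 hsf a b _ _ h2.symm h1.symm
    refine ⟨x, y, ?_⟩
    apply NumberField.RingOfIntegers.coe_injective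
    refine hab.trans ?_
    simp [hωα]
  · intro x y
    have h1 := Algebra.coe_norm_int ((x : NumberField.RingOfIntegers K) + (y : NumberField.RingOfIntegers K) * ω)
    have h2 : (((x : NumberField.RingOfIntegers K) + y * ω : NumberField.RingOfIntegers K) : K) = ((x : ℚ) : K) + ((y : ℚ) : K) * α := by
      simp [hωα]
    rw [h2, hnorm] at h1
    have h3 : Algebra.norm ℤ ((x : NumberField.RingOfIntegers K) + y * ω) = x ^ 2 + (d : ℤ) * y ^ 2 := by
      exact_mod_cast h1
    rw [Ideal.absNorm_span_singleton, h3, Int.natAbs_of_nonneg (by positivity)]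
  · intro x y h
    have h2 := congrArg (fun z : NumberField.RingOfIntegers K => (z : K)) h
    have h3 : ((x : ℚ) : K) + ((y : ℚ) : K) * α = 0 := by
      simpa [hωα] using h2
    have := hlin _ _ h3
    exact_mod_cast this

/-- If `ℓ ≥ 2`, `m` is an odd positive integer, `w = 3m²`, and `p₁ ≡ 11 (mod 24)`,
`p₂ ≡ 7 (mod 24)` are primes with `p₁ + p₂ = 2·w^(2^(ℓ-1))`, then the 2-class group of
`ℚ(√(-p₁p₂))` is isomorphic to `(ℤ/2ℤ) × (ℤ/2^ℓℤ)`. -/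
theorem two_class_group_of_type_two_twoPow (ℓ : ℕ) (hℓ : 2 ≤ ℓ)
    (m : ℕ) (hm0 : 0 < m) (hm : Odd m) (w : ℕ) (hw : w = 3 * m ^ 2)
    (p₁ p₂ : ℕ) (hp₁ : p₁.Prime) (hp₂ : p₂.Prime)
    (h₁ : p₁ % 24 = 11) (h₂ : p₂ % 24 = 7)
    (hsum : p₁ + p₂ = 2 * w ^ 2 ^ (ℓ - 1)) :
    twoClassGroupIso (p₁ * p₂) (Multiplicative (ZMod 2 × ZMod (2 ^ ℓ))) := by
  intro K _ _ α hα htop P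
  have hne : p₁ ≠ p₂ := by omega
  have hsf : Squarefree (p₁ * p₂) := by
    rw [Nat.squarefree_mul ((Nat.coprime_primes hp₁ hp₂).mpr hne)]
    exact ⟨hp₁.squarefree, hp₂.squarefree⟩
  have hd4 : (p₁ * p₂) % 4 = 1 := by
    rw [Nat.mul_mod]
    have e1 : p₁ % 4 = 3 := by omega
    have e2 : p₂ % 4 = 3 := by omega
    rw [e1, e2]
  obtain ⟨ω, hω, hrep, hnorm, hinj⟩ := aux_ring (p₁ * p₂) hd4 hsf K α hα htop
  push_cast at hω hnorm
  exact aux_main ℓ hℓ m hm0 hm w hw p₁ p₂ hp₁ hp₂ h₁ h₂ hsum ω (by push_cast; exact hω) hrep hnorm hinj P
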